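/- Let Λ ∈ P_l^+, u ∈ {0,…,n−1}, and λ ∈ 𝒴(Λ). Then λ ∈ 𝒴(Λ_u,Λ) if and only if λ̲ ∈ 𝒴(Λ_{−u}) and, for every k > 0 and every r ∈ ℤ/nℤ, the number of length-k rows of λ̲ with left end of colour r equals the number of length-k rows of λ with right end of colour −r. -/

import Mathlib

/-!
Write `ψ_k(r)` for the number of length-`k` rows of `λ` with right end of colour `r`, and let
`p = π(λ)` with steps `η_k`. Telescoping along the rows of each component shows (`path_sub_step`)
`(p_k - η̂_k)(r) = Ψ_{k+1}(r - 1) - Ψ_{k+1}(r)`, where `Ψ_k = ∑_{m ≥ k} ψ_m`. Restrictedness of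
`p + Λ_u` therefore says that `Ψ_k(r - 1) - Ψ_k(r) + Λ_u(r) ≥ 0` for all `k ≥ 1` and all `r`. These
numbers have total `1` over `r`, so they form a single fundamental weight, and a first-moment
computation in `ℤ/nℤ` identifies it as `Λ_{u + H_k}`, where `H_k = ∑_r Ψ_k(r)` is the number of
rows of length at least `k` (`diff_of_nonneg`). The left ends of the rows of `λ̲` of length at
least `k`, with colours negated, have the same total and the same cyclic differences
(`leftTotal_diff`), which makes restrictedness equivalent to the equality of colour counts.

It remains to see that these conditions force `λ̲ ∈ 𝒴(Λ_{-u})`. At level one it suffices that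
there are fewer than `n` rows of each length (`isHL_level_one`). If `λ̲` had `n` rows of length
`k`, the equality of counts would make every colour occur as a right end of a length-`k` row of
`λ`. But a highest-lift always omits a colour (`exists_colour_omitted`): if none is omitted,
rotating the columns `1, …, k` of `λ` by one component yields another cylindrical multipartition
with the same path, and `λ` is not higher than it.
-/


open scoped BigOperators

namespace BF

/-- The fundamental weight `Λ_i`, viewed as the indicator function `ZMod n → ℤ` of `i`. -/
def Lam (n : ℕ) (i : ZMod n) : ZMod n → ℤ := fun j => if j = i then 1 else 0

/-- A weight is dominant if all its coefficients are nonnegative. -/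
def Dominant (n : ℕ) (a : ZMod n → ℤ) : Prop := ∀ i, 0 ≤ a i

/-- The step weight of `e : ZMod n → ℕ`: its `Λ_j`-coefficient is `e (j-1) - e j`. -/
def stepWt (n : ℕ) (e : ZMod n → ℕ) : ZMod n → ℤ := fun j => (e (j - 1) : ℤ) - (e j : ℤ)

/-- Membership in `A_l^+`: `d` is the step weight of some `e : ZMod n → ℕ` of total sum `l`. -/
def InA (n : ℕ) [NeZero n] (l : ℕ) (d : ZMod n → ℤ) : Prop :=
  ∃ e : ZMod n → ℕ, (∑ i, e i) = l ∧ d = stepWt n e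

/-- The ground-state path of the weight `Λ`: `p̄_k (i) = Λ (i - k)`,
which is the coefficient form of `p̄_k = Λ_{v₀+k} + ⋯ + Λ_{v_{l-1}+k}`. -/
def gsp (n : ℕ) (Λ : ZMod n → ℤ) (k : ℕ) : ZMod n → ℤ := fun i => Λ (i - (k : ZMod n))

/-- `p` is a `Λ`-path of level `l`. -/
def IsPath (n : ℕ) [NeZero n] (l : ℕ) (Λ : ZMod n → ℤ) (p : ℕ → ZMod n → ℤ) : Prop :=
  (∀ k, InA n l (fun i => p (k + 1) i - p k i)) ∧ ∃ K, ∀ k ≥ K, p k = gsp n Λ k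

/-- The length of a `Λ`-path: least `K` with `p k = p̄ k` for all `k ≥ K`. -/
noncomputable def pathLen (n : ℕ) (Λ : ZMod n → ℤ) (p : ℕ → ZMod n → ℤ) : ℕ :=
  sInf {K | ∀ k ≥ K, p k = gsp n Λ k}

/-- `f : ℕ → ℕ` is a partition (rows are indexed from `0`). -/
def IsPartitionF (f : ℕ → ℕ) : Prop := (∀ i, f (i + 1) ≤ f i) ∧ ∃ N, ∀ i ≥ N, f i = 0

/-- An `l`-multipartition. -/
def IsMP (l : ℕ) (lam : Fin l → ℕ → ℕ) : Prop := ∀ j, IsPartitionF (lam j)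

/-- The data `v : Fin l → ℕ` of a decomposition `Λ = Λ_{v 0} + ⋯ + Λ_{v (l-1)}`
with `0 ≤ v 0 ≤ ⋯ ≤ v (l-1) < n`. -/
def SortedV (n l : ℕ) (v : Fin l → ℕ) : Prop := Monotone v ∧ ∀ j, v j < n

/-- The weight `Λ = Λ_{v 0} + ⋯ + Λ_{v (l-1)}` determined by `v`. -/
def wtOf (n : ℕ) {l : ℕ} (v : Fin l → ℕ) : ZMod n → ℤ :=
  fun i => ((Finset.univ.filter fun j : Fin l => ((v j : ZMod n) = i)).card : ℤ)

/-- The colour of the node in (0-based) row `i`, (1-based) column `c` of component `j`: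
`(c - (i+1) + v j) mod n`. -/
def colour (n : ℕ) {l : ℕ} (v : Fin l → ℕ) (j : Fin l) (i c : ℕ) : ZMod n :=
  (c : ZMod n) - (i : ZMod n) - 1 + (v j : ZMod n)

/-- `N^r(λ)`: the total number of nodes of colour `r` in the multipartition `λ`. -/
noncomputable def Ncolour (n : ℕ) {l : ℕ} (v : Fin l → ℕ) (lam : Fin l → ℕ → ℕ)
    (r : ZMod n) : ℕ :=
  Nat.card {x : Fin l × ℕ × ℕ //
    1 ≤ x.2.2 ∧ x.2.2 ≤ lam x.1 x.2.1 ∧ colour n v x.1 x.2.1 x.2.2 = r}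

/-- The height `f′_m` of the `m`-th column of the partition `f`. -/
noncomputable def colHt (f : ℕ → ℕ) (m : ℕ) : ℕ := Nat.card {i : ℕ // m ≤ f i}

/-- The function `e` whose step weight is the `k`-th step of `π(λ)`:
`e i = #{j : v j + k - λ^{(j)′}_{k+1} ≡ i mod n}`. -/
noncomputable def eFun (n : ℕ) {l : ℕ} (v : Fin l → ℕ) (lam : Fin l → ℕ → ℕ) (k : ℕ) :
    ZMod n → ℕ :=
  fun i => Nat.card {j : Fin l //
    (v j : ZMod n) + (k : ZMod n) - (colHt (lam j) (k + 1) : ZMod n) = i}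

/-- `p = π(λ)` where `λ` is an `l`-multipartition of highest weight `wtOf n v`. -/
def IsPi (n : ℕ) {l : ℕ} (v : Fin l → ℕ) (lam : Fin l → ℕ → ℕ)
    (p : ℕ → ZMod n → ℤ) : Prop :=
  (∀ k, (fun i => p (k + 1) i - p k i) = stepWt n (eFun n v lam k)) ∧
  ∃ K, ∀ k ≥ K, p k = gsp n (wtOf n v) k

/-- `λ` is cylindrical of highest weight `Λ = wtOf n v`. -/
def Cylindrical (n : ℕ) {l : ℕ} (v : Fin l → ℕ) (lam : Fin l → ℕ → ℕ) : Prop :=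
  (∀ (j : ℕ) (hj : j + 1 < l) (i : ℕ),
      lam ⟨j + 1, hj⟩ (i + (v ⟨j + 1, hj⟩ - v ⟨j, Nat.lt_of_succ_lt hj⟩)) ≤
        lam ⟨j, Nat.lt_of_succ_lt hj⟩ i) ∧
  ∀ (hl : 0 < l) (i : ℕ),
      lam ⟨0, hl⟩ (i + (n + v ⟨0, hl⟩ - v ⟨l - 1, Nat.sub_lt hl Nat.one_pos⟩)) ≤
        lam ⟨l - 1, Nat.sub_lt hl Nat.one_pos⟩ i

/-- `λ` is higher than `μ`: every column of each component of `λ` is at most as high as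
the corresponding column of `μ`. -/
def Higher {l : ℕ} (lam mu : Fin l → ℕ → ℕ) : Prop :=
  ∀ (j : Fin l) (k : ℕ), 1 ≤ k → colHt (lam j) k ≤ colHt (mu j) k

/-- `λ` is the highest-lift of the path `p`: it is a cylindrical multipartition with
`π(λ) = p` which is higher than every cylindrical multipartition mapping to `p`. -/
def IsHL (n : ℕ) {l : ℕ} (v : Fin l → ℕ) (lam : Fin l → ℕ → ℕ)
    (p : ℕ → ZMod n → ℤ) : Prop :=
  IsMP l lam ∧ Cylindrical n v lam ∧ IsPi n v lam p ∧
    ∀ mu : Fin l → ℕ → ℕ, IsMP l mu → Cylindrical n v mu → IsPi n v mu p → Higher lam mu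

/-- `λ ∈ 𝒴(Λ)` with `Λ = wtOf n v`. -/
def InY (n : ℕ) {l : ℕ} (v : Fin l → ℕ) (lam : Fin l → ℕ → ℕ) : Prop :=
  ∃ p, IsHL n v lam p

/-- `α′_r = -Λ_{r-1} + 2Λ_r - Λ_{r+1}`. -/
def alphaP (n : ℕ) (r : ZMod n) : ZMod n → ℤ :=
  fun i => -(Lam n (r - 1) i) + 2 * Lam n r i - Lam n (r + 1) i

/-- `ψ_r(k)`: the number of length-`k` rows of `λ` whose right end has colour `r`. -/
noncomputable def psiCount (n : ℕ) {l : ℕ} (v : Fin l → ℕ) (lam : Fin l → ℕ → ℕ)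
    (k : ℕ) (r : ZMod n) : ℕ :=
  Nat.card {x : Fin l × ℕ // lam x.1 x.2 = k ∧ colour n v x.1 x.2 k = r}

/-- The number of length-`k` rows of `λ` whose left end has colour `r`. -/
noncomputable def leftCount (n : ℕ) {l : ℕ} (v : Fin l → ℕ) (lam : Fin l → ℕ → ℕ)
    (k : ℕ) (r : ZMod n) : ℕ :=
  Nat.card {x : Fin l × ℕ // lam x.1 x.2 = k ∧ colour n v x.1 x.2 1 = r}

/-- The total number of length-`k` rows of `λ`. -/
noncomputable def rowCount {l : ℕ} (lam : Fin l → ℕ → ℕ) (k : ℕ) : ℕ :=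
  Nat.card {x : Fin l × ℕ // lam x.1 x.2 = k}

/-- `m_r(k)`: the number of `r`-nodes of `λ` in column `k` or to its right. -/
noncomputable def mCount (n : ℕ) {l : ℕ} (v : Fin l → ℕ) (lam : Fin l → ℕ → ℕ)
    (k : ℕ) (r : ZMod n) : ℕ :=
  Nat.card {x : Fin l × ℕ × ℕ //
    k ≤ x.2.2 ∧ x.2.2 ≤ lam x.1 x.2.1 ∧ colour n v x.1 x.2.1 x.2.2 = r}

/-- `p` is a `(Λ′,Λ″)`-restricted path, where `l''` is the level of `Λ″`:
`p - Λ′ ∈ 𝒫(Λ″)` and `p_k - η̂_k` is dominant for all `k`. -/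
def IsRes (n : ℕ) [NeZero n] (l'' : ℕ) (L' L'' : ZMod n → ℤ) (p : ℕ → ZMod n → ℤ) : Prop :=
  IsPath n l'' L'' (fun k i => p k i - L' i) ∧
  ∀ k, ∃ e : ZMod n → ℕ, (∑ i, e i) = l'' ∧
    (fun i => p (k + 1) i - p k i) = stepWt n e ∧ ∀ i, (e i : ℤ) ≤ p k i

/-- The length of a restricted path: `ℓ(p) = ℓ(p - Λ′)`. -/
noncomputable def resLen (n : ℕ) (L' L'' : ZMod n → ℤ) (p : ℕ → ZMod n → ℤ) : ℕ :=
  sInf {K | ∀ k ≥ K, (fun i => p k i - L' i) = gsp n L'' k}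

/-- `♯Λ`. -/
def sharpWt (n : ℕ) (Λ : ZMod n → ℤ) : ZMod n → ℤ := fun i => Λ (-i)

/-- `♯p`: `(♯p)_k (i) = a_{k-i}(k)` where `p_k = ∑ a_i(k) Λ_i`. -/
def sharpPath (n : ℕ) (p : ℕ → ZMod n → ℤ) : ℕ → ZMod n → ℤ :=
  fun k i => p k ((k : ZMod n) - i)

/-- `θ(a) = 1` if `a ≥ 0`, `0` otherwise. -/
def theta (a : ℤ) : ℕ := if 0 ≤ a then 1 else 0

/-- The function counting the entries of `μ : Fin l → ℕ` in each class mod `n`. -/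
def cntF (n : ℕ) {l : ℕ} (μ : Fin l → ℕ) : ZMod n → ℕ :=
  fun i => (Finset.univ.filter fun j : Fin l => ((μ j : ZMod n) = i)).card

/-- The energy function `H` on `A_l^+ × A_l^+`:
`H(α,β) = min_{σ ∈ S_l} ∑_j θ(μ_j - ν_{σ(j)})` where `α`, `β` are the step weights of
`Λ_{μ_0} + ⋯ + Λ_{μ_{l-1}}`, `Λ_{ν_0} + ⋯ + Λ_{ν_{l-1}}` with `0 ≤ μ_j, ν_j < n`. -/
noncomputable def Hfun (n : ℕ) (l : ℕ) (d d' : ZMod n → ℤ) : ℕ :=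
  sInf {m | ∃ μ ν : Fin l → ℕ, (∀ j, μ j < n) ∧ (∀ j, ν j < n) ∧
    d = stepWt n (cntF n μ) ∧ d' = stepWt n (cntF n ν) ∧
    m = Finset.univ.inf' ⟨1, Finset.mem_univ 1⟩
      fun σ : Equiv.Perm (Fin l) => ∑ j, theta ((μ j : ℤ) - (ν (σ j) : ℤ))}

/-- `(j, i)` is a removable `r`-node of `λ` (node at the right end of 0-based row `i`
of component `j`). -/
def RemNode (n : ℕ) {l : ℕ} (v : Fin l → ℕ) (lam : Fin l → ℕ → ℕ) (r : ZMod n)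
    (j : Fin l) (i : ℕ) : Prop :=
  1 ≤ lam j i ∧ lam j (i + 1) < lam j i ∧ colour n v j i (lam j i) = r

/-- `(j, i)` is an addable `r`-node of `λ` (node addable at the end of 0-based row `i`
of component `j`). -/
def AddNode (n : ℕ) {l : ℕ} (v : Fin l → ℕ) (lam : Fin l → ℕ → ℕ) (r : ZMod n)
    (j : Fin l) (i : ℕ) : Prop :=
  (i = 0 ∨ lam j i < lam j (i - 1)) ∧ colour n v j i (lam j i + 1) = r

/-- The diagonal number `d = c - (i+1) + v j` of the addable/removable node
`x = (j, i, isRemovable)`. -/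
def nodeD {l : ℕ} (v : Fin l → ℕ) (lam : Fin l → ℕ → ℕ) (x : Fin l × ℕ × Bool) : ℤ :=
  (if x.2.2 then (lam x.1 x.2.1 : ℤ) else (lam x.1 x.2.1 : ℤ) + 1) - ((x.2.1 : ℤ) + 1) + (v x.1 : ℤ)

/-- The total order on addable/removable nodes: `(d,j) < (d',j')` iff `d < d'`, or
`d = d'` and `j > j'`. -/
def nodeLT {l : ℕ} (v : Fin l → ℕ) (lam : Fin l → ℕ → ℕ) (x y : Fin l × ℕ × Bool) : Prop :=
  nodeD v lam x < nodeD v lam y ∨ (nodeD v lam x = nodeD v lam y ∧ (y.1 : ℕ) < (x.1 : ℕ))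

/-- `L` is the `r`-signature of `λ`: the increasing list of all addable and removable
`r`-nodes (flag `true` = removable, `false` = addable). -/
def IsSig (n : ℕ) {l : ℕ} (v : Fin l → ℕ) (lam : Fin l → ℕ → ℕ) (r : ZMod n)
    (L : List (Fin l × ℕ × Bool)) : Prop :=
  L.Pairwise (nodeLT v lam) ∧
  ∀ x : Fin l × ℕ × Bool, x ∈ L ↔
    ((x.2.2 = true ∧ RemNode n v lam r x.1 x.2.1) ∨
      (x.2.2 = false ∧ AddNode n v lam r x.1 x.2.1))

/-- One step of the reduction procedure on signature words: delete an adjacent pair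
consisting of a removable node (`true`) immediately followed by an addable node (`false`). -/
inductive SigStep : List Bool → List Bool → Prop
  | pair (l₁ l₂ : List Bool) : SigStep (l₁ ++ true :: false :: l₂) (l₁ ++ l₂)


/-! ### Column heights and row counts -/

/-- The columns of a partition are initial segments of `ℕ`. -/
theorem lt_colHt {f : ℕ → ℕ} (hf : IsPartitionF f) {m : ℕ} (hm : 1 ≤ m) (i : ℕ) :
    i < colHt f m ↔ m ≤ f i := by
  classical
  obtain ⟨h1, N, hN⟩ := hf
  have ha : Antitone f := antitone_nat_of_succ_le h1
  have hex : ∃ N, f N < m := ⟨N, by rw [hN N le_rfl]; omega⟩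
  have key : ∀ i, m ≤ f i ↔ i ∈ Finset.range (Nat.find hex) := by
    intro i
    rw [Finset.mem_range]
    constructor
    · intro h
      by_contra hlt
      have := ha (not_lt.mp hlt)
      have := Nat.find_spec hex
      omega
    · intro h
      have := Nat.find_min hex h
      omega
  have hc : colHt f m = Nat.find hex := by
    unfold colHt
    rw [Nat.subtype_card (Finset.range (Nat.find hex)) (fun x => (key x).symm), Finset.card_range]
  rw [hc, key, Finset.mem_range]

theorem colHt_anti {f : ℕ → ℕ} (hf : IsPartitionF f) {m m' : ℕ} (hm : 1 ≤ m) (h : m ≤ m') :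
    colHt f m' ≤ colHt f m := by
  by_contra hlt
  have h1 := (lt_colHt hf (hm.trans h) (colHt f m)).1 (not_le.mp hlt)
  have h2 := (lt_colHt hf hm (colHt f m)).2 (h.trans h1)
  omega

theorem colHt_eq_of {f : ℕ → ℕ} (hf : IsPartitionF f) {m N : ℕ} (hm : 1 ≤ m)
    (h : ∀ i, m ≤ f i ↔ i < N) : colHt f m = N := by
  apply le_antisymm
  · by_contra hlt
    exact absurd ((h _).1 ((lt_colHt hf hm N).1 (not_le.mp hlt))) (lt_irrefl _)
  · by_contra hlt
    exact absurd ((lt_colHt hf hm _).2 ((h _).2 (not_le.mp hlt))) (lt_irrefl _)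

theorem colHt_eq_zero {f : ℕ → ℕ} (hf : IsPartitionF f) {m : ℕ} (h : f 0 < m) :
    colHt f m = 0 := by
  have ha : Antitone f := antitone_nat_of_succ_le hf.1
  refine colHt_eq_of hf (by omega) fun i => ?_
  have := ha (Nat.zero_le i)
  omega

theorem mem_rows {f : ℕ → ℕ} (hf : IsPartitionF f) {k : ℕ} (hk : 1 ≤ k) (i : ℕ) :
    i ∈ Finset.Ico (colHt f (k + 1)) (colHt f k) ↔ f i = k := by
  rw [Finset.mem_Ico, lt_colHt hf hk, ← not_lt, lt_colHt hf (by omega)]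
  omega

/-- The length-`k` rows with a given property, counted over the interval of rows between
the heights of columns `k + 1` and `k`. -/
theorem card_rows {f : ℕ → ℕ} (hf : IsPartitionF f) {k : ℕ} (hk : 1 ≤ k) (P : ℕ → Prop)
    [DecidablePred P] :
    (Nat.card {i : ℕ // f i = k ∧ P i} : ℤ) =
      ∑ i ∈ Finset.Ico (colHt f (k + 1)) (colHt f k), if P i then 1 else 0 := by
  rw [Nat.subtype_card ((Finset.Ico (colHt f (k + 1)) (colHt f k)).filter P)
    (fun x => by rw [Finset.mem_filter, mem_rows hf hk])]
  simp

theorem finite_rows {f : ℕ → ℕ} (hf : IsPartitionF f) {k : ℕ} (hk : 1 ≤ k) (P : ℕ → Prop) :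
    Finite {i : ℕ // f i = k ∧ P i} :=
  Set.Finite.subset (Finset.finite_toSet (Finset.Ico (colHt f (k + 1)) (colHt f k)))
    (fun i hi => by
      have := (mem_rows hf hk i).2 hi.1
      exact_mod_cast this)

theorem card_mrows {l : ℕ} {lam : Fin l → ℕ → ℕ} (hl : IsMP l lam) {k : ℕ} (hk : 1 ≤ k)
    (P : Fin l → ℕ → Prop) [∀ j, DecidablePred (P j)] :
    (Nat.card {x : Fin l × ℕ // lam x.1 x.2 = k ∧ P x.1 x.2} : ℤ) =
      ∑ j, ∑ i ∈ Finset.Ico (colHt (lam j) (k + 1)) (colHt (lam j) k),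
        if P j i then 1 else 0 := by
  have e : {x : Fin l × ℕ // lam x.1 x.2 = k ∧ P x.1 x.2} ≃
      Σ j : Fin l, {i : ℕ // lam j i = k ∧ P j i} :=
    { toFun := fun x => ⟨x.1.1, x.1.2, x.2⟩
      invFun := fun y => ⟨(y.1, y.2.1), y.2.2⟩
      left_inv := fun _ => rfl
      right_inv := fun _ => rfl }
  have : ∀ j, Finite {i : ℕ // lam j i = k ∧ P j i} := fun j => finite_rows (hl j) hk _
  rw [Nat.card_congr e, Nat.card_sigma]
  push_cast
  exact Finset.sum_congr rfl fun j _ => card_rows (hl j) hk _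

theorem psiCount_eq (n : ℕ) {l : ℕ} (v : Fin l → ℕ) {lam : Fin l → ℕ → ℕ} (hl : IsMP l lam)
    {k : ℕ} (hk : 1 ≤ k) (r : ZMod n) :
    (psiCount n v lam k r : ℤ) =
      ∑ j, ∑ i ∈ Finset.Ico (colHt (lam j) (k + 1)) (colHt (lam j) k),
        if (k : ZMod n) - 1 + v j - (i : ZMod n) = r then 1 else 0 := by
  unfold psiCount
  rw [card_mrows hl hk (fun j i => colour n v j i k = r)]
  refine Finset.sum_congr rfl fun j _ => Finset.sum_congr rfl fun i _ => ?_
  have : colour n v j i k = (k : ZMod n) - 1 + v j - (i : ZMod n) := by unfold colour; ring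
  rw [this]

theorem eFun_eq (n : ℕ) {l : ℕ} (v : Fin l → ℕ) (lam : Fin l → ℕ → ℕ) (k : ℕ) (r : ZMod n) :
    (eFun n v lam k r : ℤ) =
      ∑ j, if (v j : ZMod n) + (k : ZMod n) - (colHt (lam j) (k + 1) : ZMod n) = r
        then 1 else 0 := by
  classical
  unfold eFun
  rw [Nat.subtype_card (Finset.univ.filter fun j : Fin l =>
    (v j : ZMod n) + (k : ZMod n) - (colHt (lam j) (k + 1) : ZMod n) = r)
    (fun x => by simp)]
  simp

theorem sum_eFun (n : ℕ) [NeZero n] {l : ℕ} (v : Fin l → ℕ) (lam : Fin l → ℕ → ℕ) (k : ℕ) :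
    ∑ r, eFun n v lam k r = l := by
  have : (∑ r, (eFun n v lam k r : ℤ)) = l := by
    simp_rw [eFun_eq]
    rw [Finset.sum_comm]
    simp
  exact_mod_cast this

theorem sum_psiCount (n : ℕ) [NeZero n] {l : ℕ} (v : Fin l → ℕ) {lam : Fin l → ℕ → ℕ}
    (hl : IsMP l lam) {k : ℕ} (hk : 1 ≤ k) :
    ∑ r, (psiCount n v lam k r : ℤ) = Nat.card {x : Fin l × ℕ // lam x.1 x.2 = k} := by
  have h := card_mrows hl hk (fun _ _ => True)
  simp only [and_true] at h
  rw [h]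
  simp_rw [psiCount_eq n v hl hk]
  rw [Finset.sum_comm]
  refine Finset.sum_congr rfl fun j _ => ?_
  rw [Finset.sum_comm]
  simp

/-! ### Functions on `ℤ/nℤ` with prescribed differences -/

theorem eq_of_diff_eq {n : ℕ} [NeZero n] {f g : ZMod n → ℤ}
    (hd : ∀ r, f (r - 1) - f r = g (r - 1) - g r) (hs : ∑ r, f r = ∑ r, g r) : f = g := by
  have h1 : ∀ m : ℕ, f m - g m = f 0 - g 0 := by
    intro m
    induction m with
    | zero => simp
    | succ m ih =>
      have := hd ((m + 1 : ℕ) : ZMod n)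
      push_cast at this ⊢
      rw [add_sub_cancel_right] at this
      linarith
  have h2 : ∀ r, f r - g r = f 0 - g 0 := fun r => by
    have := h1 r.val
    rwa [ZMod.natCast_zmod_val] at this
  have h3 : ∑ r, (f r - g r) = 0 := by rw [Finset.sum_sub_distrib, hs, sub_self]
  simp_rw [h2] at h3
  rw [Finset.sum_const, Finset.card_univ, ZMod.card, nsmul_eq_mul] at h3
  have hn : (n : ℤ) ≠ 0 := by exact_mod_cast NeZero.ne n
  have h4 := (mul_eq_zero.1 h3).resolve_left hn
  funext r
  have := h2 r
  linarith

theorem stepWt_inj {n : ℕ} [NeZero n] {e e' : ZMod n → ℕ} (hs : ∑ r, e r = ∑ r, e' r)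
    (h : stepWt n e = stepWt n e') : e = e' := by
  have : (fun r => (e r : ℤ)) = fun r => (e' r : ℤ) := by
    apply eq_of_diff_eq
    · intro r
      exact congrFun h r
    · exact_mod_cast hs
  funext r
  exact_mod_cast congrFun this r

theorem telescope (n : ℕ) (c r : ZMod n) {a b : ℕ} (h : a ≤ b) :
    (∑ i ∈ Finset.Ico a b, if c - (i : ZMod n) = r - 1 then (1 : ℤ) else 0) -
      (∑ i ∈ Finset.Ico a b, if c - (i : ZMod n) = r then (1 : ℤ) else 0) =
    (if c + 1 - (a : ZMod n) = r then 1 else 0) - (if c + 1 - (b : ZMod n) = r then 1 else 0) := by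
  induction b, h using Nat.le_induction with
  | base => simp
  | succ b hb ih =>
    rw [Finset.sum_Ico_succ_top hb, Finset.sum_Ico_succ_top hb]
    have e1 : (c - (b : ZMod n) = r - 1) ↔ (c + 1 - (b : ZMod n) = r) := by
      constructor <;> intro h
      · linear_combination h
      · linear_combination h
    have e2 : (c - (b : ZMod n) = r) ↔ (c + 1 - ((b + 1 : ℕ) : ZMod n) = r) := by
      push_cast
      constructor <;> intro h
      · linear_combination h
      · linear_combination h
    rw [if_congr e1 rfl rfl, if_congr e2 rfl rfl]
    linarith

/-- The differences of `ψ_{k+1}` around the cycle compare two consecutive steps of the path. -/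
theorem psi_diff (n : ℕ) {l : ℕ} (v : Fin l → ℕ) {lam : Fin l → ℕ → ℕ} (hl : IsMP l lam)
    (k : ℕ) (r : ZMod n) :
    (psiCount n v lam (k + 1) (r - 1) : ℤ) - psiCount n v lam (k + 1) r =
      eFun n v lam (k + 1) r - eFun n v lam k (r - 1) := by
  rw [psiCount_eq n v hl (by omega), psiCount_eq n v hl (by omega), eFun_eq, eFun_eq,
    ← Finset.sum_sub_distrib, ← Finset.sum_sub_distrib]
  refine Finset.sum_congr rfl fun j _ => ?_
  rw [telescope n _ r (colHt_anti (hl j) (by omega) (by omega))]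
  congr 1
  · refine if_congr ?_ rfl rfl
    push_cast
    constructor <;> intro h <;> linear_combination h
  · refine if_congr ?_ rfl rfl
    push_cast
    constructor <;> intro h <;> linear_combination h

theorem eFun_of_large (n : ℕ) {l : ℕ} (v : Fin l → ℕ) {lam : Fin l → ℕ → ℕ} (hl : IsMP l lam)
    {k : ℕ} (hk : ∀ j, lam j 0 ≤ k) (r : ZMod n) :
    (eFun n v lam k r : ℤ) = gsp n (wtOf n v) k r := by
  rw [eFun_eq]
  unfold gsp wtOf
  rw [Finset.card_filter]
  push_cast
  refine Finset.sum_congr rfl fun j _ => ?_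
  rw [colHt_eq_zero (hl j) (Nat.lt_succ_of_le (hk j))]
  refine if_congr ?_ rfl rfl
  push_cast
  constructor <;> intro h <;> linear_combination h

/-- For `p = π(λ)`, the weight `p_k - η̂_k` is the cyclic difference of the number of rows of
length greater than `k` with right end of a given colour. -/
theorem path_sub_step (n : ℕ) {l : ℕ} (v : Fin l → ℕ) {lam : Fin l → ℕ → ℕ} (hl : IsMP l lam)
    {p : ℕ → ZMod n → ℤ} (hp : IsPi n v lam p) {K : ℕ} (hK : ∀ k ≥ K, p k = gsp n (wtOf n v) k)
    (hK' : ∀ j, lam j 0 ≤ K) (r : ZMod n) (k : ℕ) :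
    p k r - eFun n v lam k r =
      ∑ m ∈ Finset.Ico (k + 1) (K + 1),
        ((psiCount n v lam m (r - 1) : ℤ) - psiCount n v lam m r) := by
  rcases le_total K k with h | h
  · rw [Finset.Ico_eq_empty (by omega), Finset.sum_empty, hK k h,
      eFun_of_large n v hl (fun j => (hK' j).trans h), sub_self]
  · induction h using Nat.decreasingInduction with
    | self =>
      rw [Finset.Ico_self, Finset.sum_empty, hK K le_rfl, eFun_of_large n v hl hK', sub_self]
    | of_succ k hk ih =>
      rw [Finset.sum_eq_sum_Ico_succ_bot (by omega), ← ih, psi_diff n v hl]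
      have := congrFun (hp.1 k) r
      simp only [stepWt] at this
      linarith

/-! ### Rows of a highest-lift omit a colour -/

/-- The quasi-periodic extension to `ℤ` of the sequence `j ↦ v_j - h_j`, where `h_j` is the
height of column `m` of component `j`; adding `l` to the index adds `n` to the value. -/
noncomputable def extX (n : ℕ) {l : ℕ} [NeZero l] (v : Fin l → ℕ) (lam : Fin l → ℕ → ℕ) (m : ℕ)
    (t : ℤ) : ℤ :=
  (v (Fin.ofNat l (t % l).toNat) : ℤ) - colHt (lam (Fin.ofNat l (t % l).toNat)) m + n * (t / l)

/-- The cyclic successor on the components. -/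
def nxt {l : ℕ} (j : Fin l) : Fin l :=
  if h : (j : ℕ) + 1 < l then ⟨j + 1, h⟩ else ⟨0, j.pos⟩

/-- The shift of rows between component `j` and its cyclic successor in the cylindrical
condition. -/
def shf (n : ℕ) {l : ℕ} (v : Fin l → ℕ) (j : Fin l) : ℕ :=
  if (j : ℕ) + 1 < l then v (nxt j) - v j else n + v (nxt j) - v j

theorem nxt_bij {l : ℕ} : Function.Bijective (nxt : Fin l → Fin l) := by
  rw [← Finite.injective_iff_bijective]
  intro a b h
  have ha := a.2
  have hb := b.2
  unfold nxt at h
  split_ifs at h <;> simp only [Fin.mk.injEq] at h <;> apply Fin.ext <;> omega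

theorem shf_eq {n l : ℕ} {v : Fin l → ℕ} (hv : SortedV n l v) (j : Fin l) :
    (v j : ℤ) + shf n v j = v (nxt j) + (if (j : ℕ) + 1 < l then 0 else (n : ℤ)) := by
  unfold shf
  split_ifs with h
  · have : v j ≤ v (nxt j) := hv.1 (by
      unfold nxt; rw [dif_pos h]; exact Fin.mk_le_of_le_val (by simp))
    omega
  · have := hv.2 j
    omega

theorem shf_cast {n l : ℕ} {v : Fin l → ℕ} (hv : SortedV n l v) (j : Fin l) :
    (v j : ZMod n) + shf n v j = v (nxt j) := by
  have := congrArg (Int.cast : ℤ → ZMod n) (shf_eq hv j)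
  push_cast at this
  rw [this]
  split_ifs <;> simp

theorem cyl_iff {n l : ℕ} {v : Fin l → ℕ} {lam : Fin l → ℕ → ℕ} :
    Cylindrical n v lam ↔ ∀ j i, lam (nxt j) (i + shf n v j) ≤ lam j i := by
  constructor
  · rintro ⟨h1, h2⟩ j i
    by_cases h : (j : ℕ) + 1 < l
    · have := h1 j h i
      unfold shf nxt
      simpa [h] using this
    · have hj : j = ⟨l - 1, Nat.sub_lt j.pos Nat.one_pos⟩ := by
        apply Fin.ext; have := j.2; simp; omega
      have := h2 j.pos i
      unfold shf nxt
      rw [← hj] at this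
      simpa [h] using this
  · intro H
    refine ⟨fun j hj i => ?_, fun hl i => ?_⟩
    · have := H ⟨j, Nat.lt_of_succ_lt hj⟩ i
      unfold shf nxt at this
      simpa [hj] using this
    · have := H ⟨l - 1, Nat.sub_lt hl Nat.one_pos⟩ i
      unfold shf nxt at this
      have e : ¬ (l - 1 + 1 < l) := by omega
      simpa [e] using this

theorem extX_nat {n l : ℕ} [NeZero l] (v : Fin l → ℕ) (lam : Fin l → ℕ → ℕ) (m : ℕ) (j : Fin l)
    (z : ℤ) : extX n v lam m (j + l * z) = (v j : ℤ) - colHt (lam j) m + n * z := by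
  have hl : (0 : ℤ) < l := by exact_mod_cast j.pos
  have h0 : (0 : ℤ) ≤ j := by positivity
  have h1 : (j : ℤ) < l := by exact_mod_cast j.2
  have e1 : ((j : ℤ) + l * z) % l = j := by
    rw [Int.add_mul_emod_self_left, Int.emod_eq_of_lt h0 h1]
  have e2 : ((j : ℤ) + l * z) / l = z := by
    rw [Int.add_mul_ediv_left _ _ hl.ne', Int.ediv_eq_zero_of_lt h0 h1, zero_add]
  unfold extX
  rw [e1, e2, Int.toNat_natCast, Fin.ofNat_val_eq_self]

theorem exists_rep {l : ℕ} [NeZero l] (t : ℤ) : ∃ (j : Fin l) (z : ℤ), t = j + l * z := by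
  have hl : (0 : ℤ) < l := by exact_mod_cast Nat.pos_of_ne_zero (NeZero.ne l)
  refine ⟨⟨(t % l).toNat, ?_⟩, t / l, ?_⟩
  · have := Int.emod_lt_of_pos t hl
    have := Int.emod_nonneg t hl.ne'
    omega
  · have := Int.emod_nonneg t hl.ne'
    have := Int.emod_add_mul_ediv t l
    simp only
    omega

theorem extX_succ {n l : ℕ} [NeZero l] {v : Fin l → ℕ} (hv : SortedV n l v)
    (lam : Fin l → ℕ → ℕ) (m : ℕ) (j : Fin l) (z : ℤ) :
    extX n v lam m (j + l * z + 1) =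
      (v j : ℤ) + shf n v j - colHt (lam (nxt j)) m + n * z := by
  have hs := shf_eq hv j
  by_cases h : (j : ℕ) + 1 < l
  · have e : (j : ℤ) + l * z + 1 = (nxt j : Fin l) + l * z := by
      unfold nxt; rw [dif_pos h]; push_cast; ring
    rw [e, extX_nat]
    rw [if_pos h] at hs
    linarith
  · have e : (j : ℤ) + l * z + 1 = (nxt j : Fin l) + l * (z + 1) := by
      unfold nxt; rw [dif_neg h]
      have h1 : (j : ℤ) + 1 = l := by have := j.2; omega
      push_cast
      linear_combination h1
    rw [e, extX_nat]
    rw [if_neg h] at hs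
    linarith

theorem extX_mono {n l : ℕ} [NeZero l] {v : Fin l → ℕ} (hv : SortedV n l v)
    {lam : Fin l → ℕ → ℕ} (hl : IsMP l lam) (hc : Cylindrical n v lam) {m : ℕ} (hm : 1 ≤ m) :
    Monotone (extX n v lam m) := by
  apply monotone_int_of_le_succ
  intro t
  obtain ⟨j, z, rfl⟩ := exists_rep (l := l) t
  rw [extX_succ hv, extX_nat]
  have : colHt (lam (nxt j)) m ≤ colHt (lam j) m + shf n v j := by
    by_contra hlt
    have h1 := (lt_colHt (hl _) hm _).1 (not_le.mp hlt)
    have h2 := h1.trans (cyl_iff.1 hc j _)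
    exact absurd ((lt_colHt (hl j) hm _).2 h2) (lt_irrefl _)
  have : (colHt (lam (nxt j)) m : ℤ) ≤ colHt (lam j) m + shf n v j := by exact_mod_cast this
  linarith

/-- If every colour occurs as the right end of a length-`k` row, then column `k` of each
component reaches, after the cyclic shift of components, below column `k + 1` of the
preceding component. -/
theorem gap_of_all_colours {n l : ℕ} {v : Fin l → ℕ} (hv : SortedV n l v)
    {lam : Fin l → ℕ → ℕ} (hl : IsMP l lam) (hc : Cylindrical n v lam) {k : ℕ} (hk : 1 ≤ k)
    (hall : ∀ r : ZMod n, psiCount n v lam k r ≠ 0) (j : Fin l) :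
    colHt (lam j) (k + 1) + shf n v j ≤ colHt (lam (nxt j)) k := by
  by_contra hlt
  have : NeZero l := ⟨j.pos.ne'⟩
  -- the value of column `k` at `j + 1` gives a colour that no length-`k` row can end in
  set Y : ℤ := extX n v lam k (j + 1) with hY
  have hYj : Y = (v j : ℤ) + shf n v j - colHt (lam (nxt j)) k := by
    have := extX_succ hv lam k j 0
    simpa using this
  have hXj : extX n v lam (k + 1) j = (v j : ℤ) - colHt (lam j) (k + 1) := by
    have := extX_nat (n := n) v lam (k + 1) j 0
    simpa using this
  have hlt' : extX n v lam (k + 1) j < Y := by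
    rw [hXj, hYj]; omega
  have hne := hall ((k : ZMod n) - 1 + (Y : ZMod n))
  unfold psiCount at hne
  obtain ⟨⟨⟨j', i⟩, hi, hcol⟩⟩ := (Nat.card_ne_zero.1 hne).1
  simp only at hi hcol
  have hz : ((v j' - i - Y : ℤ) : ZMod n) = 0 := by
    unfold colour at hcol
    push_cast
    linear_combination hcol
  obtain ⟨z, hz⟩ := (ZMod.intCast_zmod_eq_zero_iff_dvd _ n).1 hz
  have hi1 : i < colHt (lam j') k := (lt_colHt (hl j') hk i).2 hi.ge
  have hi2 : colHt (lam j') (k + 1) ≤ i := by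
    by_contra h
    have := (lt_colHt (hl j') (by omega) i).1 (not_le.mp h)
    omega
  have h1 : extX n v lam k (j' + l * (-z)) < Y := by
    rw [extX_nat, mul_neg]; omega
  have h2 : Y ≤ extX n v lam (k + 1) (j' + l * (-z)) := by
    rw [extX_nat, mul_neg]; omega
  have h3 := (extX_mono hv hl hc hk).reflect_lt (hY ▸ h1)
  have h4 := extX_mono hv hl hc (m := k + 1) (by omega) (Int.lt_add_one_iff.1 h3)
  omega

/-- In a highest-lift, the right ends of the rows of a given length omit at least one colour:
otherwise columns `1, …, k` could be rotated to the next component, giving a cylindrical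
multipartition with the same path, in some component of which column `k` is shorter. -/
theorem exists_colour_omitted {n l : ℕ} [NeZero n] {v : Fin l → ℕ} (hv : SortedV n l v)
    {lam : Fin l → ℕ → ℕ} {p : ℕ → ZMod n → ℤ} (hp : IsHL n v lam p) {k : ℕ} (hk : 1 ≤ k) :
    ∃ r : ZMod n, psiCount n v lam k r = 0 := by
  by_contra hall
  push Not at hall
  obtain ⟨hl, hc, hpi, hmin⟩ := hp
  have hc' := cyl_iff.1 hc
  have gap := gap_of_all_colours hv hl hc hk hall
  have anti : ∀ j, Antitone (lam j) := fun j => antitone_nat_of_succ_le (hl j).1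
  set nu : Fin l → ℕ → ℕ := fun j i =>
    if k < lam j i then lam j i else lam (nxt j) (i + shf n v j) with hnu
  have hnuMP : IsMP l nu := by
    intro j
    refine ⟨fun i => ?_, ?_⟩
    · have h1 := (hl j).1 i
      have h2 := hc' j (i + 1)
      have h3 := (anti (nxt j)) (show i + shf n v j ≤ i + 1 + shf n v j by omega)
      simp only [hnu]
      split_ifs <;> omega
    · obtain ⟨N, hN⟩ := (hl j).2
      refine ⟨N, fun i hi => ?_⟩
      have h1 := hN i hi
      have h2 := hc' j i
      simp only [hnu]
      split_ifs <;> omega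
  have hnuC : Cylindrical n v nu := by
    rw [cyl_iff]
    intro j i
    have h1 := hc' j i
    have h2 := hc' (nxt j) (i + shf n v j)
    simp only [hnu]
    split_ifs <;> omega
  have hbig : ∀ j m, k < m → colHt (nu j) m = colHt (lam j) m := by
    intro j m hm
    refine colHt_eq_of (hnuMP j) (by omega) fun i => ?_
    rw [lt_colHt (hl j) (by omega)]
    have h1 := hc' j i
    simp only [hnu]
    split_ifs <;> omega
  have hsmall : ∀ j m, 1 ≤ m → m ≤ k →
      colHt (nu j) m + shf n v j = colHt (lam (nxt j)) m := by
    intro j m hm hmk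
    have h0 := (gap j).trans (colHt_anti (hl (nxt j)) hm hmk)
    have : colHt (nu j) m = colHt (lam (nxt j)) m - shf n v j := by
      refine colHt_eq_of (hnuMP j) hm fun i => ?_
      have h1 := lt_colHt (hl (nxt j)) hm (i + shf n v j)
      have h2 := lt_colHt (hl j) (m := k + 1) (by omega) i
      simp only [hnu]
      split_ifs with h <;> omega
    omega
  have hnuPi : IsPi n v nu p := by
    refine ⟨fun t => ?_, hpi.2⟩
    rw [hpi.1 t]
    congr 1
    funext r
    rcases lt_or_ge k (t + 1) with h | h
    · unfold eFun
      simp_rw [hbig _ _ h]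
    · have hcount : (eFun n v nu t r : ℤ) = eFun n v lam t r := by
        rw [eFun_eq, eFun_eq]
        symm
        rw [← (Equiv.ofBijective nxt nxt_bij).sum_comp]
        symm
        refine Finset.sum_congr rfl fun j _ => if_congr ?_ rfl rfl
        rw [Equiv.ofBijective_apply, ← hsmall j _ (by omega) h, ← shf_cast hv j]
        push_cast
        constructor <;> intro h <;> linear_combination h
      exact_mod_cast hcount.symm
  have hhigh := hmin nu hnuMP hnuC hnuPi
  -- some row of length `k` exists, so there is at least one component
  have hl0 : Nonempty (Fin l) := by
    have := hall 0
    unfold psiCount at this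
    obtain ⟨x⟩ := (Nat.card_ne_zero.1 this).1
    exact ⟨x.1.1⟩
  have : NeZero l := ⟨(hl0.some).pos.ne'⟩
  have hanti : Antitone (extX n v lam k) := by
    apply antitone_int_of_succ_le
    intro t
    obtain ⟨j, z, rfl⟩ := exists_rep (l := l) t
    rw [extX_succ hv, extX_nat]
    have h1 := hhigh j k hk
    have h2 := hsmall j k hk le_rfl
    omega
  have j0 := hl0.some
  have h1 := extX_nat (n := n) v lam k j0 0
  have h2 := extX_nat (n := n) v lam k j0 1
  have h3 := hanti (show (j0 : ℤ) + l * 0 ≤ j0 + l * 1 by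
    have : (0 : ℤ) ≤ l := by positivity
    linarith)
  have h4 : (0 : ℤ) < n := by exact_mod_cast Nat.pos_of_ne_zero (NeZero.ne n)
  rw [h1, h2] at h3
  linarith

/-! ### Level one -/

/-- Every multipartition has a path. -/
theorem exists_isPi (n : ℕ) {l : ℕ} (v : Fin l → ℕ) {lam : Fin l → ℕ → ℕ} (hl : IsMP l lam) :
    ∃ p, IsPi n v lam p := by
  set K := ∑ j, lam j 0 with hKdef
  have hK : ∀ j, lam j 0 ≤ K := fun j =>
    Finset.single_le_sum (f := fun j => lam j 0) (fun _ _ => Nat.zero_le _) (Finset.mem_univ j)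
  refine ⟨fun k i => gsp n (wtOf n v) (max k K) i -
    ∑ m ∈ Finset.Ico k K, stepWt n (eFun n v lam m) i, fun k => ?_, K, fun k hk => ?_⟩
  · funext i
    rcases lt_or_ge k K with h | h
    · simp only
      rw [Finset.sum_eq_sum_Ico_succ_bot h, max_eq_right h.le, max_eq_right h]
      ring
    · simp only
      rw [Finset.Ico_eq_empty (by omega), Finset.Ico_eq_empty (by omega), max_eq_left h,
        max_eq_left (by omega)]
      unfold stepWt
      rw [eFun_of_large n v hl (fun j => (hK j).trans h),
        eFun_of_large n v hl (fun j => (hK j).trans h)]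
      unfold gsp
      push_cast
      rw [show i - ((k : ZMod n) + 1) = i - 1 - k by ring]
      simp
  · funext i
    simp only
    rw [Finset.Ico_eq_empty (by omega), max_eq_left hk]
    simp

/-- At level one, a partition with fewer than `n` rows of each length is a highest-lift: its
column heights are determined modulo `n` by the path, and their successive differences are the
least possible. -/
theorem isHL_level_one (n : ℕ) [NeZero n] (w : ℕ) {mu : Fin 1 → ℕ → ℕ}
    (hmu : IsPartitionF (mu 0))
    (hreg : ∀ k, 1 ≤ k → colHt (mu 0) k < colHt (mu 0) (k + 1) + n) :
    ∃ q, IsHL n (fun _ : Fin 1 => w) mu q := by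
  have hMP : IsMP 1 mu := fun j => by rw [Subsingleton.elim j 0]; exact hmu
  obtain ⟨q, hq⟩ := exists_isPi n (fun _ : Fin 1 => w) hMP
  refine ⟨q, hMP, ⟨fun j hj => by omega, fun h i => ?_⟩, hq, ?_⟩
  · exact (antitone_nat_of_succ_le hmu.1) (Nat.le_add_right _ _)
  · intro nu hnu _ hnuPi j k hk
    rw [Subsingleton.elim j 0]
    have hmod : ∀ t, (colHt (nu 0) (t + 1) : ZMod n) = colHt (mu 0) (t + 1) := by
      intro t
      have h1 : eFun n (fun _ : Fin 1 => w) nu t = eFun n (fun _ : Fin 1 => w) mu t :=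
        stepWt_inj (by rw [sum_eFun, sum_eFun]) (by rw [← hnuPi.1 t, ← hq.1 t])
      have h2 := congrArg (Nat.cast : ℕ → ℤ)
        (congrFun h1 ((w : ZMod n) + t - colHt (mu 0) (t + 1)))
      rw [eFun_eq, eFun_eq] at h2
      simp only [Finset.univ_unique, Finset.sum_singleton, Fin.default_eq_zero, if_true] at h2
      split_ifs at h2 with h3
      · linear_combination -h3
      · simp at h2
    have main : ∀ m, 1 ≤ m → m ≤ max k (mu 0 0 + 1) → colHt (mu 0) m ≤ colHt (nu 0) m := by
      intro m hm hmK
      revert hm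
      induction hmK using Nat.decreasingInduction with
      | self =>
        intro _
        rw [colHt_eq_zero hmu (by omega)]
        exact Nat.zero_le _
      | of_succ m _ ih =>
        intro hm
        have h1 := ih (by omega)
        have h2 := hreg m hm
        have h3 := colHt_anti (hnu 0) hm (Nat.le_succ m)
        obtain ⟨t, rfl⟩ : ∃ t, m = t + 1 := ⟨m - 1, by omega⟩
        by_contra hlt
        have h4 := (ZMod.natCast_eq_natCast_iff' _ _ n).1 (hmod t)
        have h5 := (Nat.modEq_iff_dvd' (not_le.mp hlt).le).1 h4
        have h6 := Nat.le_of_dvd (by omega) h5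
        simp only [Nat.succ_eq_add_one] at h3
        omega
    exact main k hk (le_max_left _ _)

/-! ### Comparison of the colour counts -/

/-- The number of rows of length at least `k` of the partition `f`, viewed with highest weight
`Λ_{-u}`, whose left end has colour `-r`. -/
noncomputable def leftTotal (n u : ℕ) (f : ℕ → ℕ) (k : ℕ) (r : ZMod n) : ℤ :=
  ∑ i ∈ Finset.range (colHt f k), if (u : ZMod n) + (i : ZMod n) = r then 1 else 0

theorem sum_leftTotal (n : ℕ) [NeZero n] (u : ℕ) (f : ℕ → ℕ) (k : ℕ) :
    ∑ r, leftTotal n u f k r = colHt f k := by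
  unfold leftTotal
  rw [Finset.sum_comm]
  simp

theorem leftTotal_diff (n u : ℕ) (f : ℕ → ℕ) (k : ℕ) (r : ZMod n) :
    leftTotal n u f k (r - 1) - leftTotal n u f k r =
      (if (u : ZMod n) + (colHt f k : ZMod n) = r then 1 else 0) -
        (if (u : ZMod n) = r then 1 else 0) := by
  unfold leftTotal
  induction colHt f k with
  | zero => simp
  | succ b ih =>
    rw [Finset.sum_range_succ, Finset.sum_range_succ]
    have e1 : ((u : ZMod n) + (b : ZMod n) = r - 1) ↔
        ((u : ZMod n) + ((b + 1 : ℕ) : ZMod n) = r) := by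
      push_cast
      constructor <;> intro h <;> linear_combination h
    rw [if_congr e1 rfl rfl]
    linarith

theorem leftCount_eq {n : ℕ} {u : ℕ} (hu : u < n) {mu : Fin 1 → ℕ → ℕ}
    (hmu : IsPartitionF (mu 0)) {k : ℕ} (hk : 1 ≤ k) (r : ZMod n) :
    (leftCount n (fun _ : Fin 1 => (n - u) % n) mu k (-r) : ℤ) =
      leftTotal n u (mu 0) k r - leftTotal n u (mu 0) (k + 1) r := by
  have hMP : IsMP 1 mu := fun j => by rw [Subsingleton.elim j 0]; exact hmu
  unfold leftCount leftTotal
  rw [card_mrows hMP hk (fun j i => colour n (fun _ : Fin 1 => (n - u) % n) j i 1 = -r)]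
  simp only [Finset.univ_unique, Finset.sum_singleton, Fin.default_eq_zero]
  rw [Finset.sum_Ico_eq_sub _ (colHt_anti hmu hk (Nat.le_succ k))]
  have e : ∀ i : ℕ, colour n (fun _ : Fin 1 => (n - u) % n) 0 i 1 = -r ↔
      (u : ZMod n) + (i : ZMod n) = r := by
    intro i
    unfold colour
    rw [ZMod.natCast_mod, Nat.cast_sub hu.le, ZMod.natCast_self]
    push_cast
    constructor <;> intro h <;> linear_combination -h
  simp_rw [e]

/-- A function `F` on `ℤ/nℤ` whose cyclic differences, corrected by `Λ_u`, are nonnegative is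
determined by its total `H`: the corrected differences are nonnegative of total `1`, hence a single
fundamental weight, and that weight is `u + H` because `∑ r (F (r-1) - F r) = ∑ F r`. -/
theorem diff_of_nonneg {n : ℕ} [NeZero n] (F : ZMod n → ℤ) (u : ZMod n) (H : ℕ)
    (hs : ∑ r, F r = H) (hpos : ∀ r, 0 ≤ F (r - 1) - F r + (if u = r then 1 else 0)) (r : ZMod n) :
    F (r - 1) - F r = (if u + (H : ZMod n) = r then 1 else 0) - (if u = r then 1 else 0) := by
  set b : ZMod n → ℤ := fun r => F (r - 1) - F r + (if u = r then 1 else 0) with hb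
  have hshift : ∀ G : ZMod n → ℤ, ∑ r, G (r - 1) = ∑ r, G r := fun G =>
    (Equiv.subRight (1 : ZMod n)).sum_comp G
  have hbsum : ∑ r, b r = 1 := by
    simp only [hb, Finset.sum_add_distrib, Finset.sum_sub_distrib]
    rw [hshift F]
    simp
  obtain ⟨s, hs1⟩ : ∃ s, 0 < b s := by
    by_contra hno
    push Not at hno
    have := Finset.sum_nonpos (s := Finset.univ) (fun r _ => hno r)
    omega
  have hrest : b s + ∑ r ∈ Finset.univ.erase s, b r = 1 := by
    rw [Finset.add_sum_erase _ _ (Finset.mem_univ s), hbsum]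
  have hrest0 : 0 ≤ ∑ r ∈ Finset.univ.erase s, b r := Finset.sum_nonneg fun r _ => hpos r
  have hbs : ∀ r, b r = if s = r then 1 else 0 := by
    intro r
    split_ifs with h
    · rw [← h]
      exact le_antisymm (by linarith) hs1
    · have h1 : 1 ≤ b s := hs1
      exact (Finset.sum_eq_zero_iff_of_nonneg (fun r _ => hpos r)).1
        (le_antisymm (by linarith [hrest]) hrest0) r
        (Finset.mem_erase.2 ⟨fun h' => h h'.symm, Finset.mem_univ r⟩)
  have hmom : ∑ r : ZMod n, r * ((b r : ℤ) : ZMod n) = u + H := by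
    have e1 : ∀ r : ZMod n, r * ((b r : ℤ) : ZMod n) =
        ((r - 1) * (F (r - 1) : ZMod n) + (F (r - 1) : ZMod n)) - r * (F r : ZMod n) +
          (if u = r then r else 0) := by
      intro r
      simp only [hb]
      split_ifs <;> push_cast <;> ring
    simp_rw [e1]
    have e2 : ∑ r : ZMod n, ((r - 1) * (F (r - 1) : ZMod n) + (F (r - 1) : ZMod n)) =
        ∑ r : ZMod n, (r * (F r : ZMod n) + (F r : ZMod n)) :=
      (Equiv.subRight (1 : ZMod n)).sum_comp (fun r => r * (F r : ZMod n) + (F r : ZMod n))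
    rw [Finset.sum_add_distrib, Finset.sum_sub_distrib, e2, Finset.sum_add_distrib]
    have := congrArg (Int.cast : ℤ → ZMod n) hs
    push_cast at this
    rw [this]
    simp
    ring
  have hsu : s = u + H := by
    rw [← hmom]
    simp [hbs]
  have := hbs r
  simp only [hb] at this
  rw [hsu] at this
  linarith

/-- `λ ∈ 𝒴(Λ_u,Λ)` iff `λ̲ ∈ 𝒴(Λ_{-u})` and, for every `k > 0` and
colour `r`, the number of length-`k` rows of `λ̲` with left end of colour `r` equals
the number of length-`k` rows of `λ` with right end of colour `-r`. -/
theorem membership_via_underline (n : ℕ) [NeZero n] (hn : 2 ≤ n) (l : ℕ)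
    (v : Fin l → ℕ) (hv : SortedV n l v) (u : ℕ) (hu : u < n)
    (lam : Fin l → ℕ → ℕ) (hY : InY n v lam)
    (mu : Fin 1 → ℕ → ℕ) (hmuP : IsPartitionF (mu 0))
    (hmud : ∀ k : ℕ, 0 < k →
      Nat.card {i : ℕ // mu 0 i = k} = Nat.card {x : Fin l × ℕ // lam x.1 x.2 = k}) :
    (∃ q : ℕ → ZMod n → ℤ, IsRes n l (Lam n (u : ZMod n)) (wtOf n v) q ∧
        IsHL n v lam (fun k i => q k i - Lam n (u : ZMod n) i)) ↔
      ((∃ q' : ℕ → ZMod n → ℤ, IsHL n (fun _ : Fin 1 => (n - u) % n) mu q') ∧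
        ∀ k : ℕ, 0 < k → ∀ r : ZMod n,
          leftCount n (fun _ : Fin 1 => (n - u) % n) mu k r = psiCount n v lam k (-r)) := by
  classical
  obtain ⟨p, hp⟩ := hY
  have hl : IsMP l lam := hp.1
  have hrow : ∀ k, 1 ≤ k →
      (Nat.card {x : Fin l × ℕ // lam x.1 x.2 = k} : ℤ) =
        colHt (mu 0) k - colHt (mu 0) (k + 1) := by
    intro k hk
    rw [← hmud k hk]
    have h := card_rows hmuP hk (fun _ => True)
    simp only [and_true] at h
    rw [h]
    have := colHt_anti hmuP hk (show k ≤ k + 1 by omega)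
    simp
    omega
  -- the bound `K` lies beyond the lengths of all rows and of the path
  have hbound : ∀ p, IsPi n v lam p → ∃ K, (∀ k ≥ K, p k = gsp n (wtOf n v) k) ∧
      (∀ j, lam j 0 ≤ K) ∧ mu 0 0 ≤ K := by
    rintro p ⟨_, K, hK⟩
    have h1 : ∀ j, lam j 0 ≤ ∑ j, lam j 0 := fun j =>
      Finset.single_le_sum (f := fun j => lam j 0) (fun _ _ => Nat.zero_le _) (Finset.mem_univ j)
    exact ⟨K + mu 0 0 + ∑ j, lam j 0, fun k hk => hK k (by omega),
      fun j => (h1 j).trans (by omega), by omega⟩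
  have hLam : ∀ i : ZMod n, Lam n (u : ZMod n) i = if (u : ZMod n) = i then 1 else 0 := by
    intro i
    unfold Lam
    exact if_congr eq_comm rfl rfl
  constructor
  · rintro ⟨q, hres, hq⟩
    obtain ⟨K, hK1, hK2, hK3⟩ := hbound _ hq.2.2.1
    have hzero : colHt (mu 0) (K + 1) = 0 := colHt_eq_zero hmuP (by omega)
    have hF : ∀ k, 1 ≤ k → k ≤ K + 1 → ∀ r,
        ∑ m ∈ Finset.Ico k (K + 1), (psiCount n v lam m r : ℤ) = leftTotal n u (mu 0) k r := by
      intro k hk hkK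
      have htot : ∑ r, ∑ m ∈ Finset.Ico k (K + 1), (psiCount n v lam m r : ℤ) =
          colHt (mu 0) k := by
        rw [Finset.sum_comm]
        have : ∀ m ∈ Finset.Ico k (K + 1), ∑ r, (psiCount n v lam m r : ℤ) =
            -(colHt (mu 0) (m + 1) : ℤ) - -(colHt (mu 0) m : ℤ) := by
          intro m hm
          have hm1 : 1 ≤ m := hk.trans (Finset.mem_Ico.1 hm).1
          rw [sum_psiCount n v hl hm1, hrow m hm1]
          ring
        rw [Finset.sum_congr rfl this,
          Finset.sum_Ico_sub (fun m => -(colHt (mu 0) m : ℤ)) hkK, hzero]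
        simp
      refine fun r => congrFun (eq_of_diff_eq
        (f := fun r => ∑ m ∈ Finset.Ico k (K + 1), (psiCount n v lam m r : ℤ))
        (g := leftTotal n u (mu 0) k) (fun r => ?_) ?_) r
      · rw [leftTotal_diff]
        refine diff_of_nonneg _ _ _ htot (fun r => ?_) r
        obtain ⟨t, rfl⟩ : ∃ t, k = t + 1 := ⟨k - 1, by omega⟩
        rw [← Finset.sum_sub_distrib, ← path_sub_step n v hl hq.2.2.1 hK1 hK2 r t, ← hLam]
        obtain ⟨e, he1, he2, he3⟩ := hres.2 t
        have hee : e = eFun n v lam t := by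
          refine stepWt_inj (by rw [he1, sum_eFun]) ?_
          rw [← he2, ← hq.2.2.1.1 t]
          funext i
          ring
        have := he3 r
        rw [hee] at this
        linarith
      · rw [htot, sum_leftTotal]
    have hcount : ∀ k, 0 < k → ∀ r : ZMod n,
        leftCount n (fun _ : Fin 1 => (n - u) % n) mu k r = psiCount n v lam k (-r) := by
      intro k hk r
      have h1 := leftCount_eq hu hmuP hk (-r)
      rw [neg_neg] at h1
      have : (leftCount n (fun _ : Fin 1 => (n - u) % n) mu k r : ℤ) =
          psiCount n v lam k (-r) := by
        rw [h1]
        rcases le_or_gt k K with h | h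
        · rw [← hF k hk (by omega), ← hF (k + 1) (by omega) (by omega),
            Finset.sum_eq_sum_Ico_succ_bot (by omega)]
          ring
        · have hz : ∀ m, K < m → colHt (mu 0) m = 0 := fun m hm =>
            colHt_eq_zero hmuP (by omega)
          rw [psiCount_eq n v hl hk]
          have hz' : ∀ j, colHt (lam j) k = 0 := fun j =>
            colHt_eq_zero (hl j) (by have := hK2 j; omega)
          simp [leftTotal, hz k h, hz (k + 1) (by omega), hz']
      exact_mod_cast this
    refine ⟨isHL_level_one n _ hmuP fun k hk => ?_, hcount⟩
    by_contra hge
    obtain ⟨r, hr⟩ := exists_colour_omitted hv hp hk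
    have h1 := leftCount_eq hu hmuP hk r
    rw [hcount k hk, neg_neg, hr] at h1
    unfold leftTotal at h1
    rw [← Finset.sum_Ico_eq_sub _ (colHt_anti hmuP hk (Nat.le_succ k))] at h1
    -- `n` consecutive rows of the single partition realise every colour
    set a := colHt (mu 0) (k + 1) with ha
    have hval := ZMod.val_lt (r - (u : ZMod n) - (a : ZMod n))
    rw [Nat.cast_zero] at h1
    have h2 := (Finset.sum_eq_zero_iff_of_nonneg
      (f := fun i : ℕ => if (u : ZMod n) + (i : ZMod n) = r then (1 : ℤ) else 0)
      (fun i _ => by split_ifs <;> simp)).1 h1.symm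
      (a + (r - (u : ZMod n) - (a : ZMod n)).val) (Finset.mem_Ico.2 ⟨by omega, by omega⟩)
    rw [if_pos] at h2
    · exact absurd h2 one_ne_zero
    · push_cast
      rw [ZMod.natCast_zmod_val]
      ring
  · rintro ⟨-, hcount⟩
    obtain ⟨K, hK1, hK2, hK3⟩ := hbound p hp.2.2.1
    have hpq : (fun k i => p k i + Lam n (u : ZMod n) i - Lam n (u : ZMod n) i) = p := by
      funext k i
      ring
    refine ⟨fun k i => p k i + Lam n (u : ZMod n) i, ⟨?_, fun k => ?_⟩, ?_⟩
    · refine ⟨fun k => ⟨eFun n v lam k, sum_eFun n v lam k, ?_⟩, K, fun k hk => ?_⟩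
      · rw [← hp.2.2.1.1 k]
        funext i
        ring
      · rw [← hK1 k hk]
        funext i
        ring
    · refine ⟨eFun n v lam k, sum_eFun n v lam k, ?_, fun r => ?_⟩
      · rw [← hp.2.2.1.1 k]
        funext i
        ring
      · have hF : ∀ r, ∑ m ∈ Finset.Ico (k + 1) (K + 1), (psiCount n v lam m r : ℤ) =
            leftTotal n u (mu 0) (k + 1) r := by
          intro r
          have h1 : ∀ m ∈ Finset.Ico (k + 1) (K + 1), (psiCount n v lam m r : ℤ) =
              -leftTotal n u (mu 0) (m + 1) r - -leftTotal n u (mu 0) m r := by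
            intro m hm
            have hm1 : 1 ≤ m := by have := (Finset.mem_Ico.1 hm).1; omega
            have h2 := leftCount_eq hu hmuP hm1 r
            rw [hcount m hm1, neg_neg] at h2
            rw [h2]
            ring
          have hz : ∀ m, K < m → leftTotal n u (mu 0) m r = 0 := fun m hm => by
            unfold leftTotal
            rw [colHt_eq_zero hmuP (by omega)]
            simp
          rw [Finset.sum_congr rfl h1]
          rcases le_total k K with h | h
          · rw [Finset.sum_Ico_sub (fun m => -leftTotal n u (mu 0) m r) (by omega),
              hz (K + 1) (by omega)]
            ring
          · rw [Finset.Ico_eq_empty (by omega), hz (k + 1) (by omega)]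
            simp
        have h1 := path_sub_step n v hl hp.2.2.1 hK1 hK2 r k
        rw [Finset.sum_sub_distrib, hF, hF, leftTotal_diff] at h1
        simp only [hLam]
        have h3 : (0 : ℤ) ≤ if (u : ZMod n) + (colHt (mu 0) (k + 1) : ZMod n) = r
            then 1 else 0 := by split_ifs <;> simp
        linarith
    · rw [hpq]
      exact hp

end BF
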